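/- The left maximal solution g of (1 − (3/4)z g − z² g') g = 1 with g(z₀) = g₀ > 0, extended to z = 0 by g(0) = 1, is C^∞ on [0, z₀]. -/

import Mathlib

open Set Filter

/-- A solution of `x² w' = a w + b` near `0⁺` with `a` bounded below by a positive constant
and `b → 0` tends to `0`. -/
theorem tendsto_zero_of_sq_mul_deriv_eq {z₀ : ℝ} (hz₀ : 0 < z₀) {a b w : ℝ → ℝ} {c : ℝ}
    (hc : 0 < c) (ha : ∀ᶠ x in nhdsWithin 0 (Ioi 0), c ≤ a x)
    (hb : Tendsto b (nhdsWithin 0 (Ioi 0)) (nhds 0))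
    (hw : ∀ x ∈ Ioo 0 z₀, HasDerivAt w ((a x * w x + b x) / x ^ 2) x) :
    Tendsto w (nhdsWithin 0 (Ioi 0)) (nhds 0) := by
  suffices hsq : Tendsto (fun x => w x ^ 2) (nhdsWithin 0 (Ioi 0)) (nhds 0) by
    have h := hsq.sqrt
    simp only [Real.sqrt_sq_eq_abs, Real.sqrt_zero] at h
    exact (tendsto_zero_iff_abs_tendsto_zero w).2 h
  have key : ∀ ε > 0, ∀ᶠ x in nhdsWithin (0 : ℝ) (Ioi 0), w x ^ 2 < ε := by
    intro ε hε
    have hb2 : Tendsto (fun x => b x ^ 2) (nhdsWithin 0 (Ioi 0)) (nhds 0) := by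
      simpa using hb.pow 2
    have hbs : ∀ᶠ x in nhdsWithin (0 : ℝ) (Ioi 0), b x ^ 2 < c ^ 2 * (ε / 2) :=
      hb2.eventually_lt_const (by positivity)
    obtain ⟨d, hd, hdsub⟩ := mem_nhdsGT_iff_exists_Ioo_subset.1
      (ha.and (hbs.and (Ioo_mem_nhdsGT hz₀)))
    have hd0 : (0 : ℝ) < d := hd
    set F : ℝ → ℝ := fun x => (w x ^ 2 - ε / 2) * Real.exp (c * x⁻¹) with hF
    have hderiv : ∀ x ∈ Ioo 0 d, HasDerivAt F
        ((2 * w x * ((a x * w x + b x) / x ^ 2) - (w x ^ 2 - ε / 2) * (c / x ^ 2))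
          * Real.exp (c * x⁻¹)) x := by
      intro x hx
      have hx0 : x ≠ 0 := hx.1.ne'
      have h1 := ((hw x (hdsub hx).2.2).pow 2).sub_const (ε / 2)
      have h2 := ((hasDerivAt_inv hx0).const_mul c).exp
      refine (h1.mul h2).congr_deriv ?_
      simp only [Pi.pow_apply]
      field_simp
      ring
    have hmono : MonotoneOn F (Ioo 0 d) := by
      refine monotoneOn_of_deriv_nonneg (convex_Ioo 0 d)
        (fun x hx => (hderiv x hx).continuousAt.continuousWithinAt)
        (fun x hx => ?_) (fun x hx => ?_)
      · rw [interior_Ioo] at hx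
        exact (hderiv x hx).differentiableAt.differentiableWithinAt
      · rw [interior_Ioo] at hx
        rw [(hderiv x hx).deriv]
        have hx0 : x ≠ 0 := hx.1.ne'
        have hax := (hdsub hx).1
        have hbx := (hdsub hx).2.1
        refine mul_nonneg ?_ (Real.exp_pos _).le
        have : 2 * w x * ((a x * w x + b x) / x ^ 2) - (w x ^ 2 - ε / 2) * (c / x ^ 2)
            = (2 * w x * (a x * w x + b x) - (w x ^ 2 - ε / 2) * c) / x ^ 2 := by
          field_simp
        rw [this]
        refine div_nonneg ?_ (sq_nonneg x)
        have h1 : 0 ≤ (a x - c) * w x ^ 2 := mul_nonneg (sub_nonneg.2 hax) (sq_nonneg _)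
        have h2 : 0 ≤ c * (c * w x ^ 2 + 2 * b x * w x + (ε / 2) * c) := by
          nlinarith [sq_nonneg (c * w x + b x)]
        have h3 := nonneg_of_mul_nonneg_right h2 hc
        nlinarith
    have hexp : Tendsto (fun x : ℝ => F (d / 2) * Real.exp (-(c * x⁻¹)))
        (nhdsWithin 0 (Ioi 0)) (nhds 0) := by
      have : Tendsto (fun x : ℝ => Real.exp (-(c * x⁻¹))) (nhdsWithin 0 (Ioi 0)) (nhds 0) :=
        Real.tendsto_exp_neg_atTop_nhds_zero.comp
          (tendsto_inv_nhdsGT_zero.const_mul_atTop hc)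
      simpa using this.const_mul (F (d / 2))
    filter_upwards [hexp.eventually_lt_const (half_pos hε), Ioo_mem_nhdsGT (half_pos hd0)]
      with x hx hxd
    have h := hmono ⟨hxd.1, by linarith [hxd.2]⟩ ⟨half_pos hd0, by linarith⟩ hxd.2.le
    have h' := mul_le_mul_of_nonneg_right h (Real.exp_pos (-(c * x⁻¹))).le
    have h'' : F x * Real.exp (-(c * x⁻¹)) = w x ^ 2 - ε / 2 := by
      simp only [hF]
      rw [mul_assoc, ← Real.exp_add, add_neg_cancel, Real.exp_zero, mul_one]
    linarith
  refine tendsto_order.2 ⟨fun l hl => ?_, key⟩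
  exact Eventually.of_forall fun x => hl.trans_le (sq_nonneg _)

/-- A function continuous on `[0, z₀]` whose derivative on `(0, z₀]` extends to a `C^n` function
on `[0, z₀]` is `C^(n+1)`. -/
theorem contDiffOn_succ_of_hasDerivWithinAt_Ioc {z₀ : ℝ} (hz₀ : 0 < z₀) {u v : ℝ → ℝ} {n : ℕ}
    (hu : ContinuousOn u (Icc 0 z₀))
    (huv : ∀ x ∈ Ioc 0 z₀, HasDerivWithinAt u (v x) (Icc 0 z₀) x)
    (hv : ContDiffOn ℝ n v (Icc 0 z₀)) : ContDiffOn ℝ (n + 1 : ℕ) u (Icc 0 z₀) := by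
  have hat : ∀ x ∈ Ioo 0 z₀, HasDerivAt u (v x) x := fun x hx =>
    (huv x (Ioo_subset_Ioc_self hx)).hasDerivAt (Icc_mem_nhds hx.1 hx.2)
  have hmem : (0 : ℝ) ∈ Icc 0 z₀ := left_mem_Icc.2 hz₀.le
  have h0 : HasDerivWithinAt u (v 0) (Ici 0) 0 := by
    refine hasDerivWithinAt_Ici_of_tendsto_deriv (s := Ioo 0 z₀)
      (fun x hx => (hat x hx).differentiableAt.differentiableWithinAt)
      ((hu 0 hmem).mono Ioo_subset_Icc_self) (Ioo_mem_nhdsGT hz₀) ?_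
    have : Tendsto v (nhdsWithin 0 (Ioi 0)) (nhds (v 0)) :=
      (hv.continuousOn 0 hmem).mono_left
        (nhdsWithin_le_of_mem (mem_of_superset (Ioo_mem_nhdsGT hz₀) Ioo_subset_Icc_self))
    refine this.congr' ?_
    filter_upwards [Ioo_mem_nhdsGT hz₀] with x hx
    exact (hat x hx).deriv.symm
  have hall : ∀ x ∈ Icc 0 z₀, HasDerivWithinAt u (v x) (Icc 0 z₀) x := by
    intro x hx
    rcases hx.1.eq_or_lt with rfl | hx0
    · exact h0.mono Icc_subset_Ici_self
    · exact huv x ⟨hx0, hx.2⟩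
  have huniq := uniqueDiffOn_Icc hz₀
  rw [Nat.cast_add, Nat.cast_one, contDiffOn_succ_iff_derivWithin huniq]
  refine ⟨fun x hx => (hall x hx).differentiableWithinAt, by simp, ?_⟩
  exact hv.congr fun x hx => (hall x hx).derivWithin (huniq x hx)

/-- Differentiating the linear equation `x² u' = a u + b` once. -/
theorem HasDerivWithinAt.div_sq_of_linear {s : Set ℝ} {a b u : ℝ → ℝ} {a' b' x : ℝ}
    (hx : x ≠ 0) (ha : HasDerivWithinAt a a' s x) (hb : HasDerivWithinAt b b' s x)
    (hu : HasDerivWithinAt u ((a x * u x + b x) / x ^ 2) s x) (k : ℝ) :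
    HasDerivWithinAt (Function.update (fun y => (a y * u y + b y) / y ^ 2) 0 k)
      (((a x - 2 * x) * ((a x * u x + b x) / x ^ 2) + (a' * u x + b')) / x ^ 2) s x := by
  have h := ((ha.mul hu).add hb).div ((hasDerivWithinAt_id x s).pow 2) (pow_ne_zero 2 hx)
  refine (h.congr_deriv ?_).congr_of_eventuallyEq ?_ ?_
  · simp
    field_simp
    ring
  · filter_upwards [mem_nhdsWithin_of_mem_nhds (isOpen_ne.mem_nhds hx)] with y hy
    simp [Function.update_of_ne hy]
  · simp [Function.update_of_ne hx]

/-- Regularity up to the singular point `0` for the linear equation `x² u' = a u + b`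
with `a 0 > 0`. -/
theorem contDiffOn_of_sq_mul_deriv_eq {z₀ : ℝ} (hz₀ : 0 < z₀) (n : ℕ) :
    ∀ {a b u : ℝ → ℝ}, ContDiffOn ℝ n a (Icc 0 z₀) → ContDiffOn ℝ n b (Icc 0 z₀) → 0 < a 0 →
      (∀ x ∈ Ioc 0 z₀, HasDerivWithinAt u ((a x * u x + b x) / x ^ 2) (Icc 0 z₀) x) →
      u 0 = -b 0 / a 0 → ContDiffOn ℝ n u (Icc 0 z₀) := by
  have hmem : (0 : ℝ) ∈ Icc 0 z₀ := left_mem_Icc.2 hz₀.le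
  have hle : nhdsWithin (0 : ℝ) (Ioi 0) ≤ nhdsWithin 0 (Icc 0 z₀) :=
    nhdsWithin_le_of_mem (mem_of_superset (Ioo_mem_nhdsGT hz₀) Ioo_subset_Icc_self)
  induction n with
  | zero =>
    intro a b u ha hb ha0 hu hu0
    rw [Nat.cast_zero, contDiffOn_zero] at *
    intro x hx
    rcases hx.1.eq_or_lt with rfl | hx0
    · have hta : Tendsto a (nhdsWithin 0 (Ioi 0)) (nhds (a 0)) := (ha 0 hmem).mono_left hle
      have htb : Tendsto b (nhdsWithin 0 (Ioi 0)) (nhds (b 0)) := (hb 0 hmem).mono_left hle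
      have hw : Tendsto (fun x => u x - u 0) (nhdsWithin 0 (Ioi 0)) (nhds 0) := by
        refine tendsto_zero_of_sq_mul_deriv_eq (a := a) (b := fun x => b x + a x * u 0) hz₀
          (half_pos ha0) ((hta.eventually_const_lt (half_lt_self ha0)).mono fun _ h => h.le)
          ?_ fun x hx => ?_
        · have h := htb.add (hta.mul_const (u 0))
          rwa [hu0, mul_div_cancel₀ _ ha0.ne', add_neg_cancel, ← hu0] at h
        · refine (((hu x (Ioo_subset_Ioc_self hx)).hasDerivAt
            (Icc_mem_nhds hx.1 hx.2)).sub_const (u 0)).congr_deriv ?_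
          ring
      have hu' : Tendsto u (nhdsWithin 0 (Ioi 0)) (nhds (u 0)) := by
        simpa using hw.add_const (u 0)
      have h1 : ContinuousWithinAt u (Ioi 0) 0 := hu'
      exact (continuousWithinAt_Ioi_iff_Ici.1 h1).mono Icc_subset_Ici_self
    · exact (hu x ⟨hx0, hx.2⟩).continuousWithinAt
  | succ n ih =>
    intro a b u ha hb ha0 hu hu0
    have huniq := uniqueDiffOn_Icc hz₀
    have hn : ((n : ℕ) : WithTop ℕ∞) ≤ ((n + 1 : ℕ) : WithTop ℕ∞) := by
      exact_mod_cast n.le_succ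
    have hn1 : ((n + 1 : ℕ) : WithTop ℕ∞) ≠ 0 := by exact_mod_cast n.succ_ne_zero
    have hn2 : ((n : ℕ) : WithTop ℕ∞) + 1 ≤ ((n + 1 : ℕ) : WithTop ℕ∞) := by norm_cast
    have hun := ih (ha.of_le hn) (hb.of_le hn) ha0 hu hu0
    have ha' := ha.derivWithin huniq hn2
    have hb' := hb.derivWithin huniq hn2
    refine contDiffOn_succ_of_hasDerivWithinAt_Ioc hz₀
      (v := Function.update (fun y => (a y * u y + b y) / y ^ 2) 0
        (-(derivWithin a (Icc 0 z₀) 0 * u 0 + derivWithin b (Icc 0 z₀) 0) / a 0))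
      hun.continuousOn (fun x hx => ?_) ?_
    · rw [Function.update_of_ne hx.1.ne']
      exact hu x hx
    · refine ih (a := fun x => a x - 2 * x)
        (b := fun x => derivWithin a (Icc 0 z₀) x * u x + derivWithin b (Icc 0 z₀) x)
        ((ha.of_le hn).sub (contDiffOn_const.mul contDiffOn_id))
        ((ha'.mul hun).add hb') (by simpa using ha0) (fun x hx => ?_) (by simp)
      have hxI := Ioc_subset_Icc_self hx
      rw [Function.update_of_ne hx.1.ne']
      exact HasDerivWithinAt.div_sq_of_linear hx.1.ne'
        (ha.differentiableOn hn1 x hxI).hasDerivWithinAt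
        (hb.differentiableOn hn1 x hxI).hasDerivWithinAt (hu x hx) _

/-- The left maximal solution `g` of `(1 − (3/4) z g − z² g') g = 1` with
`g z₀ = g₀ > 0`, positive on `(0, z₀]`, extended to `z = 0` by `g 0 = 1`,
is `C^∞` on `[0, z₀]`. -/
theorem stmt_13 (z₀ g₀ : ℝ) (hz₀ : 0 < z₀) (hg₀ : 0 < g₀)
    (g : ℝ → ℝ) (hinit : g z₀ = g₀) (h0 : g 0 = 1)
    (hpos : ∀ z ∈ Ioc (0 : ℝ) z₀, 0 < g z)
    (hsol : ∀ z ∈ Ioc (0 : ℝ) z₀, DifferentiableAt ℝ g z ∧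
      (1 - 3 / 4 * z * g z - z ^ 2 * deriv g z) * g z = 1)
    (hlim : Tendsto g (nhdsWithin 0 (Ioi 0)) (nhds 1)) :
    ContDiffOn ℝ (⊤ : ℕ∞) g (Icc 0 z₀) := by
  have hne : ∀ x ∈ Icc 0 z₀, g x ≠ 0 := by
    intro x hx
    rcases hx.1.eq_or_lt with rfl | hx0
    · simp [h0]
    · exact (hpos x ⟨hx0, hx.2⟩).ne'
  have hder : ∀ x ∈ Ioc 0 z₀, HasDerivWithinAt g
      ((1 - (g x)⁻¹ - 3 / 4 * x * g x) / x ^ 2) (Icc 0 z₀) x := by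
    intro x hx
    have hx0 : x ≠ 0 := hx.1.ne'
    have hg := hne x (Ioc_subset_Icc_self hx)
    refine (hsol x hx).1.hasDerivAt.hasDerivWithinAt.congr_deriv ?_
    have h := eq_inv_of_mul_eq_one_left (hsol x hx).2
    rw [← h]
    field_simp
    ring
  have hcont : ContinuousOn g (Icc 0 z₀) := by
    intro x hx
    rcases hx.1.eq_or_lt with rfl | hx0
    · have h1 : ContinuousWithinAt g (Ioi 0) 0 := by
        rw [ContinuousWithinAt, h0]
        exact hlim
      exact (continuousWithinAt_Ioi_iff_Ici.1 h1).mono Icc_subset_Ici_self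
    · exact (hder x ⟨hx0, hx.2⟩).continuousWithinAt
  refine contDiffOn_infty.2 fun n => ?_
  induction n with
  | zero => simpa using hcont
  | succ n ih =>
    refine contDiffOn_succ_of_hasDerivWithinAt_Ioc hz₀
      (v := Function.update (fun y => (1 - (g y)⁻¹ - 3 / 4 * y * g y) / y ^ 2) 0 (3 / 4))
      hcont (fun x hx => ?_) ?_
    · rw [Function.update_of_ne hx.1.ne']
      exact hder x hx
    · refine contDiffOn_of_sq_mul_deriv_eq hz₀ n
        (a := fun x => (g x)⁻¹ ^ 2 - 11 / 4 * x) (b := fun x => -(3 / 4) * g x)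
        (((ih.inv hne).pow 2).sub (contDiffOn_const.mul contDiffOn_id))
        (contDiffOn_const.mul ih) (by simp [h0]) (fun x hx => ?_) (by simp [h0])
      have hx0 : x ≠ 0 := hx.1.ne'
      have hg := hne x (Ioc_subset_Icc_self hx)
      have hgx := hder x hx
      have h := (((hgx.inv hg).const_sub 1).sub
        (((hasDerivWithinAt_id x (Icc 0 z₀)).const_mul (3 / 4)).mul hgx)).div
          ((hasDerivWithinAt_id x (Icc 0 z₀)).pow 2) (pow_ne_zero 2 hx0)
      rw [Function.update_of_ne hx0]
      refine (h.congr_deriv ?_).congr_of_eventuallyEq ?_ ?_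
      · simp
        field_simp
        ring
      · filter_upwards [mem_nhdsWithin_of_mem_nhds (isOpen_ne.mem_nhds hx0)] with y hy
        simp [Function.update_of_ne hy]
      · simp [Function.update_of_ne hx0]
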